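/- arXiv:2604.27460 — 4 statements merged into one kernel-verified Lean document; each statement's English description precedes it below -/
import Mathlib

section
/- Let n, r, m be positive integers with r < n. Let X₁ ∈ ℝ^{n×r}, X₂ ∈ ℝ^{n×(n−r)}, B̄₂ ∈ ℝ^{(n−r)×m}, and F ∈ ℝ^{m×n}, and assume that I_{n−r} + B̄₂ F X₂ is invertible. Suppose x₁ ∈ ℝ^r and x₂ ∈ ℝ^{n−r} satisfy the algebraic constraint x₂ = −B̄₂ F (X₁ x₁ + X₂ x₂), and set x := X₁ x₁ + X₂ x₂. Then: (i) x₂ = −(I_{n−r} + B̄₂ F X₂)⁻¹ B̄₂ F X₁ x₁; (ii) the matrix I_n + X₂ B̄₂ F is invertible; and (iii) F x = F (I_n + X₂ B̄₂ F)⁻¹ X₁ x₁, i.e., the full-state feedback value F x equals Ω(F) x₁ where Ω(F) := F (I_n + X₂ B̄₂ F)⁻¹ X₁. -/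
open Matrix

/-- Static form of Lemma 1: under the algebraic constraint
`x₂ = −B̄₂ F (X₁ x₁ + X₂ x₂)`, the algebraic part `x₂` is determined by `x₁`,
`I_n + X₂ B̄₂ F` is invertible, and the feedback value `F x` equals `Ω(F) x₁`
with `Ω(F) = F (I_n + X₂ B̄₂ F)⁻¹ X₁`. -/
theorem feedback_reduction
    (n r m : ℕ) (hn : 0 < n) (hr0 : 0 < r) (hm : 0 < m) (hrn : r < n)
    (X₁ : Matrix (Fin n) (Fin r) ℝ)
    (X₂ : Matrix (Fin n) (Fin (n - r)) ℝ)
    (B₂ : Matrix (Fin (n - r)) (Fin m) ℝ)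
    (F : Matrix (Fin m) (Fin n) ℝ)
    (h : IsUnit (1 + B₂ * F * X₂))
    (x₁ : Fin r → ℝ) (x₂ : Fin (n - r) → ℝ)
    (hx₂ : x₂ = -(B₂ * F).mulVec (X₁.mulVec x₁ + X₂.mulVec x₂))
    (x : Fin n → ℝ) (hx : x = X₁.mulVec x₁ + X₂.mulVec x₂) :
    x₂ = -((1 + B₂ * F * X₂)⁻¹ * (B₂ * F) * X₁).mulVec x₁ ∧
      IsUnit (1 + X₂ * B₂ * F) ∧
      F.mulVec x = (F * (1 + X₂ * B₂ * F)⁻¹ * X₁).mulVec x₁ := by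
  have hd : IsUnit (1 + B₂ * F * X₂).det := (Matrix.isUnit_iff_isUnit_det _).1 h
  have hd' : IsUnit (1 + X₂ * B₂ * F).det := by
    rw [Matrix.mul_assoc, Matrix.det_one_add_mul_comm]
    exact hd
  have e1 : (1 + B₂ * F * X₂).mulVec x₂ = -(((B₂ * F) * X₁).mulVec x₁) := by
    rw [Matrix.add_mulVec, Matrix.one_mulVec]
    rw [Matrix.mulVec_add, Matrix.mulVec_mulVec, Matrix.mulVec_mulVec] at hx₂
    nth_rewrite 1 [hx₂]
    abel
  have e2 : (1 + X₂ * B₂ * F).mulVec x = X₁.mulVec x₁ := by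
    have h3 : X₂.mulVec x₂ = -((X₂ * B₂ * F).mulVec x) := by
      rw [← hx] at hx₂
      rw [hx₂, Matrix.mulVec_neg, Matrix.mulVec_mulVec, Matrix.mul_assoc]
    rw [Matrix.add_mulVec, Matrix.one_mulVec]
    nth_rewrite 1 [hx]
    rw [h3]
    abel
  refine ⟨?_, (Matrix.isUnit_iff_isUnit_det _).2 hd', ?_⟩
  · rw [Matrix.mul_assoc, ← Matrix.mulVec_mulVec, ← Matrix.mulVec_neg, ← e1,
      Matrix.mulVec_mulVec, Matrix.nonsing_inv_mul _ hd, Matrix.one_mulVec]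
  · rw [← Matrix.mulVec_mulVec, ← e2, Matrix.mulVec_mulVec, Matrix.mul_assoc,
      Matrix.nonsing_inv_mul _ hd', Matrix.mul_one]
end

section
/- Let n, r, m be positive integers with r < n. Let J ∈ ℝ^{r×r}, X₁ ∈ ℝ^{n×r}, X₂ ∈ ℝ^{n×(n−r)}, B̄₁ ∈ ℝ^{r×m}, B̄₂ ∈ ℝ^{(n−r)×m}, and F ∈ ℝ^{m×n}, and assume that I_{n−r} + B̄₂ F X₂ is invertible. Then for every λ ∈ ℝ, the determinant of the n×n block matrix with blocks [λI_r − (J + B̄₁ F X₁), −B̄₁ F X₂; −B̄₂ F X₁, −(I_{n−r} + B̄₂ F X₂)] equals (−1)^{n−r} · det(I_{n−r} + B̄₂ F X₂) · det(λI_r − (J + B̄₁ F (I_n + X₂ B̄₂ F)⁻¹ X₁)). -/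
open Matrix

/-- Determinant of the transformed closed-loop pencil via Schur's determinant formula:
`det [λI − (J + B̄₁FX₁), −B̄₁FX₂; −B̄₂FX₁, −(I + B̄₂FX₂)]
  = (−1)^{n−r} det(I + B̄₂FX₂) det(λI − (J + B̄₁ Ω(F)))`. -/
theorem det_block_closed_loop_pencil
    (n r m : ℕ) (hn : 0 < n) (hr0 : 0 < r) (hm : 0 < m) (hrn : r < n)
    (J : Matrix (Fin r) (Fin r) ℝ)
    (X₁ : Matrix (Fin n) (Fin r) ℝ)
    (X₂ : Matrix (Fin n) (Fin (n - r)) ℝ)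
    (B₁ : Matrix (Fin r) (Fin m) ℝ)
    (B₂ : Matrix (Fin (n - r)) (Fin m) ℝ)
    (F : Matrix (Fin m) (Fin n) ℝ)
    (h : IsUnit (1 + B₂ * F * X₂)) :
    ∀ lam : ℝ,
      (Matrix.fromBlocks
          (lam • (1 : Matrix (Fin r) (Fin r) ℝ) - (J + B₁ * F * X₁))
          (-(B₁ * F * X₂))
          (-(B₂ * F * X₁))
          (-(1 + B₂ * F * X₂))).det
        = (-1 : ℝ) ^ (n - r) * (1 + B₂ * F * X₂).det *
            (lam • (1 : Matrix (Fin r) (Fin r) ℝ)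
              - (J + B₁ * F * (1 + X₂ * B₂ * F)⁻¹ * X₁)).det := by
  intro lam
  obtain ⟨u, hu⟩ := h
  have hDK : (1 + B₂ * F * X₂) * (↑u⁻¹ : Matrix (Fin (n - r)) (Fin (n - r)) ℝ) = 1 := by
    rw [← hu]; exact u.mul_inv
  have hKD : (↑u⁻¹ : Matrix (Fin (n - r)) (Fin (n - r)) ℝ) * (1 + B₂ * F * X₂) = 1 := by
    rw [← hu]; exact u.inv_mul
  generalize (↑u⁻¹ : Matrix (Fin (n - r)) (Fin (n - r)) ℝ) = K at hDK hKD
  have hinv : (1 + X₂ * B₂ * F)⁻¹ = 1 - X₂ * K * (B₂ * F) := by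
    apply Matrix.inv_eq_right_inv
    have e : (1 + X₂ * B₂ * F) * (1 - X₂ * K * (B₂ * F))
        = 1 + X₂ * B₂ * F - X₂ * ((1 + B₂ * F * X₂) * K) * (B₂ * F) := by
      simp only [Matrix.mul_add, Matrix.add_mul, Matrix.mul_sub, Matrix.mul_one, Matrix.one_mul,
        Matrix.mul_assoc]
    rw [e, hDK, Matrix.mul_one, Matrix.mul_assoc]
    abel
  letI : Invertible (-(1 + B₂ * F * X₂)) :=
    ⟨-K, by rw [neg_mul_neg, hKD], by rw [neg_mul_neg, hDK]⟩
  have hK : ⅟(-(1 + B₂ * F * X₂)) = -K := rfl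
  rw [Matrix.det_fromBlocks₂₂, hK, hinv, Matrix.det_neg, Fintype.card_fin]
  congr 2
  simp only [Matrix.mul_sub, Matrix.sub_mul, Matrix.mul_one, Matrix.mul_assoc, Matrix.neg_mul,
    Matrix.mul_neg, neg_neg]
  abel
end

section
/- Let n, r, m be positive integers with r < n. Let E, A ∈ ℝ^{n×n}, B ∈ ℝ^{n×m}, F ∈ ℝ^{m×n}, and let Y, X ∈ ℝ^{n×n} be invertible matrices such that Yᵀ E X is the block matrix [I_r, 0; 0, 0] and Yᵀ A X is the block matrix [J, 0; 0, I_{n−r}] for some J ∈ ℝ^{r×r}. Write X = [X₁ X₂] with X₁ ∈ ℝ^{n×r} and X₂ ∈ ℝ^{n×(n−r)}, and set B̄₁ := [I_r 0] Yᵀ B ∈ ℝ^{r×m} and B̄₂ := [0 I_{n−r}] Yᵀ B ∈ ℝ^{(n−r)×m}. Assume I_{n−r} + B̄₂ F X₂ is invertible. Then for every λ ∈ ℂ, det(λE − (A + BF)) = 0 (with the real matrix λE − (A+BF) interpreted entrywise in ℂ) if and only if λ is an eigenvalue of the complexification of J + B̄₁ F (I_n + X₂ B̄₂ F)⁻¹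 X₁. In particular, the polynomial λ ↦ det(λE − (A+BF)) is not identically zero, i.e., the closed-loop pencil (E, A+BF) is regular. -/
open Matrix

/-- Identification of `Fin r ⊕ Fin (n − r)` with `Fin n` (for `r ≤ n`), used to express
block matrices in Kronecker canonical form as `n × n` matrices. -/
def kcfEquiv (n r : ℕ) (h : r ≤ n) : Fin r ⊕ Fin (n - r) ≃ Fin n :=
  finSumFinEquiv.trans (finCongr (Nat.add_sub_cancel' h))

theorem aux_schur {r k : ℕ} (a : Matrix (Fin r) (Fin r) ℂ) (b : Matrix (Fin r) (Fin k) ℂ)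
    (c : Matrix (Fin k) (Fin r) ℂ) (d e : Matrix (Fin k) (Fin k) ℂ) (h : e * d = 1) (lam : ℂ) :
    (lam • Matrix.fromBlocks (1 : Matrix (Fin r) (Fin r) ℂ) 0 0 (0 : Matrix (Fin k) (Fin k) ℂ)
      - Matrix.fromBlocks a b c d).det
      = (-d).det * (lam • (1 : Matrix (Fin r) (Fin r) ℂ) - (a - b * e * c)).det := by
  have h' : d * e = 1 := mul_eq_one_comm.mp h
  let _ : Invertible (-d) := ⟨-e, by simp [h], by simp [h']⟩
  have h1 : lam • Matrix.fromBlocks (1 : Matrix (Fin r) (Fin r) ℂ) 0 0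
      (0 : Matrix (Fin k) (Fin k) ℂ) - Matrix.fromBlocks a b c d
      = Matrix.fromBlocks (lam • 1 - a) (-b) (-c) (-d) := by
    rw [Matrix.fromBlocks_smul, sub_eq_add_neg, Matrix.fromBlocks_neg, Matrix.fromBlocks_add]
    simp [sub_eq_add_neg]
  rw [h1, Matrix.det_fromBlocks₂₂]
  have : ⅟(-d) = -e := rfl
  rw [this]
  congr 2
  simp only [Matrix.neg_mul, Matrix.mul_neg, neg_neg]
  abel

theorem aux_woodbury {n r m k : ℕ} (F : Matrix (Fin m) (Fin n) ℝ)
    (X₁ : Matrix (Fin n) (Fin r) ℝ) (X₂ : Matrix (Fin n) (Fin k) ℝ)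
    (B₂ : Matrix (Fin k) (Fin m) ℝ) (e : Matrix (Fin k) (Fin k) ℝ)
    (h : (1 + B₂ * F * X₂) * e = 1) :
    (1 + X₂ * B₂ * F)⁻¹ = 1 - X₂ * e * B₂ * F := by
  apply Matrix.inv_eq_right_inv
  have : (1 + X₂ * B₂ * F) * (1 - X₂ * e * B₂ * F)
      = 1 + X₂ * B₂ * F - X₂ * ((1 + B₂ * F * X₂) * e) * B₂ * F := by
    simp only [Matrix.mul_add, Matrix.add_mul, Matrix.mul_sub, Matrix.one_mul,
      Matrix.mul_one, Matrix.mul_assoc]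
  rw [this, h]
  simp

/-- Lemma 1: for an index-1 regular pair `(E, A)` in Kronecker canonical form, the finite
spectrum of the closed-loop pencil `(E, A + BF)` coincides with the spectrum of
`J + B̄₁ Ω(F)`, where `Ω(F) = F (I + X₂ B̄₂ F)⁻¹ X₁`; in particular the closed-loop
pencil is regular. -/
theorem closed_loop_pencil_spectrum
    (n r m : ℕ) (hn : 0 < n) (hr0 : 0 < r) (hm : 0 < m) (hrn : r < n)
    (E A : Matrix (Fin n) (Fin n) ℝ)
    (B : Matrix (Fin n) (Fin m) ℝ)
    (F : Matrix (Fin m) (Fin n) ℝ)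
    (Y X : Matrix (Fin n) (Fin n) ℝ)
    (hY : IsUnit Y.det) (hX : IsUnit X.det)
    (J : Matrix (Fin r) (Fin r) ℝ)
    (hE : Yᵀ * E * X =
      Matrix.reindex (kcfEquiv n r hrn.le) (kcfEquiv n r hrn.le)
        (Matrix.fromBlocks (1 : Matrix (Fin r) (Fin r) ℝ) 0 0
          (0 : Matrix (Fin (n - r)) (Fin (n - r)) ℝ)))
    (hA : Yᵀ * A * X =
      Matrix.reindex (kcfEquiv n r hrn.le) (kcfEquiv n r hrn.le)
        (Matrix.fromBlocks J 0 0 (1 : Matrix (Fin (n - r)) (Fin (n - r)) ℝ)))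
    (X₁ : Matrix (Fin n) (Fin r) ℝ)
    (hX₁ : X₁ = X.submatrix id fun j => kcfEquiv n r hrn.le (Sum.inl j))
    (X₂ : Matrix (Fin n) (Fin (n - r)) ℝ)
    (hX₂ : X₂ = X.submatrix id fun j => kcfEquiv n r hrn.le (Sum.inr j))
    (B₁ : Matrix (Fin r) (Fin m) ℝ)
    (hB₁ : B₁ = (Yᵀ * B).submatrix (fun i => kcfEquiv n r hrn.le (Sum.inl i)) id)
    (B₂ : Matrix (Fin (n - r)) (Fin m) ℝ)
    (hB₂ : B₂ = (Yᵀ * B).submatrix (fun i => kcfEquiv n r hrn.le (Sum.inr i)) id)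
    (hinv : IsUnit (1 + B₂ * F * X₂)) :
    (∀ lam : ℂ,
        (lam • E.map (Complex.ofReal : ℝ → ℂ)
            - (A + B * F).map (Complex.ofReal : ℝ → ℂ)).det = 0
          ↔ (lam • (1 : Matrix (Fin r) (Fin r) ℂ)
              - (J + B₁ * F * (1 + X₂ * B₂ * F)⁻¹ * X₁).map
                  (Complex.ofReal : ℝ → ℂ)).det = 0) ∧
      (∃ lam : ℂ,
        (lam • E.map (Complex.ofReal : ℝ → ℂ)
            - (A + B * F).map (Complex.ofReal : ℝ → ℂ)).det ≠ 0) := by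
  obtain ⟨u, hu⟩ := hinv
  set e : Matrix (Fin (n - r)) (Fin (n - r)) ℝ := u⁻¹.val with he
  have h1 : (1 + B₂ * F * X₂) * e = 1 := by rw [← hu]; simp [he]
  have h2 : e * (1 + B₂ * F * X₂) = 1 := by rw [← hu]; simp [he]
  set q := kcfEquiv n r hrn.le with hq
  have hcl : Yᵀ * (A + B * F) * X = Matrix.reindex q q
      (Matrix.fromBlocks (J + B₁ * F * X₁) (B₁ * F * X₂) (B₂ * F * X₁) (1 + B₂ * F * X₂)) := by
    have hbf : Yᵀ * (B * F) * X = Matrix.reindex q q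
      (Matrix.fromBlocks (B₁ * F * X₁) (B₁ * F * X₂) (B₂ * F * X₁) (B₂ * F * X₂)) := by
      rw [← Matrix.mul_assoc]
      apply (Matrix.reindex q q).symm.injective
      rw [Equiv.symm_apply_apply]
      subst hX₁ hX₂ hB₁ hB₂
      ext i j
      rcases i with i | i <;> rcases j with j | j <;>
        simp [Matrix.mul_apply]
    rw [Matrix.mul_add, Matrix.add_mul, hA, hbf]
    have : Matrix.fromBlocks (J + B₁ * F * X₁) (B₁ * F * X₂) (B₂ * F * X₁) (1 + B₂ * F * X₂)
      = Matrix.fromBlocks J 0 0 1 + Matrix.fromBlocks (B₁ * F * X₁) (B₁ * F * X₂)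
        (B₂ * F * X₁) (B₂ * F * X₂) := by
      rw [Matrix.fromBlocks_add]; simp
    rw [this]
    rfl
  have hS : J + B₁ * F * (1 + X₂ * B₂ * F)⁻¹ * X₁
      = (J + B₁ * F * X₁) - (B₁ * F * X₂) * e * (B₂ * F * X₁) := by
    rw [aux_woodbury F X₁ X₂ B₂ e h1]
    simp only [Matrix.mul_sub, Matrix.sub_mul, Matrix.mul_one, Matrix.mul_assoc]
    abel
  rw [hS]
  set a := J + B₁ * F * X₁
  set b := B₁ * F * X₂
  set c := B₂ * F * X₁
  set d := 1 + B₂ * F * X₂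
  let f : ℝ →+* ℂ := Complex.ofRealHom
  have hmul : ∀ {i j k : ℕ} (M : Matrix (Fin i) (Fin j) ℝ) (N : Matrix (Fin j) (Fin k) ℝ),
      (M * N).map (Complex.ofReal : ℝ → ℂ) = M.map Complex.ofReal * N.map Complex.ofReal :=
    fun M N => Matrix.map_mul (f := f)
  have hde : e.map (Complex.ofReal : ℝ → ℂ) * d.map Complex.ofReal = 1 := by
    rw [← hmul, h2]
    exact Matrix.map_one f (map_zero f) (map_one f)
  have hdet : ∀ lam : ℂ, (Yᵀ.map (Complex.ofReal : ℝ → ℂ)).det *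
      (lam • E.map (Complex.ofReal : ℝ → ℂ) - (A + B * F).map (Complex.ofReal : ℝ → ℂ)).det *
      (X.map (Complex.ofReal : ℝ → ℂ)).det = (-(d.map (Complex.ofReal : ℝ → ℂ))).det *
        (lam • (1 : Matrix (Fin r) (Fin r) ℂ) - (a - b * e * c).map Complex.ofReal).det := by
    intro lam
    rw [← Matrix.det_mul, ← Matrix.det_mul, Matrix.mul_sub, Matrix.sub_mul, Matrix.mul_smul,
      Matrix.smul_mul, ← hmul, ← hmul, ← hmul, ← hmul, hE, hcl]
    have hm2 : (a - b * e * c).map (Complex.ofReal : ℝ → ℂ) = a.map Complex.ofReal -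
        b.map Complex.ofReal * e.map Complex.ofReal * c.map Complex.ofReal := by
      rw [← hmul, ← hmul]
      ext i j; simp
    rw [hm2, ← aux_schur _ _ _ _ _ hde, ← Matrix.det_reindex_self q]
    congr 1
    ext i j
    simp only [Matrix.sub_apply, Matrix.smul_apply, Matrix.map_apply, Matrix.reindex_apply,
      Matrix.submatrix_apply]
    rcases q.symm i with i | i <;> rcases q.symm j with j | j <;>
      simp [Matrix.one_apply, apply_ite]
  have hdetmap : ∀ {k : ℕ} (M : Matrix (Fin k) (Fin k) ℝ), IsUnit M.det →
      (M.map (Complex.ofReal : ℝ → ℂ)).det ≠ 0 := by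
    intro k M hM
    have : (M.map (Complex.ofReal : ℝ → ℂ)).det = f M.det := (RingHom.map_det f M).symm
    rw [this]
    exact (hM.map f).ne_zero
  have hY0 := hdetmap Yᵀ (by rwa [Matrix.det_transpose])
  have hX0 := hdetmap X hX
  have hd0 : (-(d.map (Complex.ofReal : ℝ → ℂ))).det ≠ 0 := by
    have := hdetmap d ((Matrix.isUnit_iff_isUnit_det _).mp ⟨u, hu⟩)
    rw [Matrix.det_neg]
    exact mul_ne_zero (pow_ne_zero _ (by norm_num)) this
  have key : ∀ lam : ℂ,
      (lam • E.map (Complex.ofReal : ℝ → ℂ) - (A + B * F).map (Complex.ofReal : ℝ → ℂ)).det = 0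
      ↔ (lam • (1 : Matrix (Fin r) (Fin r) ℂ) - (a - b * e * c).map Complex.ofReal).det = 0 := by
    intro lam
    have := hdet lam
    constructor
    · intro h
      rw [h] at this
      simpa [hd0] using this.symm
    · intro h
      rw [h] at this
      simpa [hY0, hX0] using this
  refine ⟨key, ?_⟩
  simp only [ne_eq, key]
  by_contra! hcon
  refine (Matrix.charpoly_monic ((a - b * e * c).map (Complex.ofReal : ℝ → ℂ))).ne_zero ?_
  apply Polynomial.funext
  intro t
  rw [Matrix.eval_charpoly, Polynomial.eval_zero, ← hcon t, Matrix.smul_one_eq_diagonal]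
  rfl
end

section
/- Let n, r, m be positive integers with r < n. Let X₁ ∈ ℝ^{n×r}, X₂ ∈ ℝ^{n×(n−r)}, B̄₂ ∈ ℝ^{(n−r)×m}, F ∈ ℝ^{m×n}, and F̄ ∈ ℝ^{m×r}, and assume that I_n + X₂ B̄₂ F is invertible. Then F (I_n + X₂ B̄₂ F)⁻¹ X₁ = F̄ if and only if F (X₁ − X₂ B̄₂ F̄) = F̄. -/
open Matrix

/-- Preimage characterization in Lemma 1: `Ω(F) = F̄` iff `F S = F̄` with
`S = X₁ − X₂ B̄₂ F̄`. -/
theorem omega_preimage_characterization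
    (n r m : ℕ) (hn : 0 < n) (hr0 : 0 < r) (hm : 0 < m) (hrn : r < n)
    (X₁ : Matrix (Fin n) (Fin r) ℝ)
    (X₂ : Matrix (Fin n) (Fin (n - r)) ℝ)
    (B₂ : Matrix (Fin (n - r)) (Fin m) ℝ)
    (F : Matrix (Fin m) (Fin n) ℝ)
    (Fbar : Matrix (Fin m) (Fin r) ℝ)
    (h : IsUnit (1 + X₂ * B₂ * F)) :
    F * (1 + X₂ * B₂ * F)⁻¹ * X₁ = Fbar ↔ F * (X₁ - X₂ * B₂ * Fbar) = Fbar := by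
  have hd : IsUnit (1 + X₂ * B₂ * F).det := (Matrix.isUnit_iff_isUnit_det _).mp h
  generalize X₂ * B₂ = G at *
  constructor
  · intro e
    have h1 : (1 + G * F) * ((1 + G * F)⁻¹ * X₁) = X₁ :=
      Matrix.mul_nonsing_inv_cancel_left _ _ hd
    rw [Matrix.mul_assoc] at e
    generalize (1 + G * F)⁻¹ * X₁ = Y at *
    rw [Matrix.add_mul, Matrix.one_mul, Matrix.mul_assoc, e] at h1
    rw [← h1, add_sub_cancel_right, e]
  · intro e
    have h1 : (1 + G * F) * (X₁ - G * Fbar) = X₁ := by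
      rw [Matrix.add_mul, Matrix.one_mul, Matrix.mul_assoc, e, sub_add_cancel]
    have h2 : (1 + G * F)⁻¹ * X₁ = X₁ - G * Fbar := by
      have h3 := Matrix.nonsing_inv_mul_cancel_left (1 + G * F) (X₁ - G * Fbar) hd
      rwa [h1] at h3
    rw [Matrix.mul_assoc, h2, e]
end
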